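/- arXiv:1211.3655 — 2 statements merged into one kernel-verified Lean document; each statement's English description precedes it below -/
import Mathlib

section
/- (Poincaré inequality (A.2) on star-shaped Lipschitz domains.) Let n ≥ 2, M > 0, r > 0, let φ : S^{n−1} → [1, 1+M] be Lipschitz with constant M, and let Ω = {y ∈ ℝⁿ : |y| < r φ(y/|y|)}. Let 1 ≤ p < ∞ and let S ⊂ Ω be a measurable set of positive Lebesgue measure |S|. Then there is a constant C = C(M, n, p) such that for every function u smooth on a neighborhood of the closure of Ω, ‖u − −∫_S u dy‖_{L^p(Ω)} ≤ C r^{n+1} |S|^{−1} ‖∇u‖_{L^p(Ω)}, where −∫_S u dy = |S|^{−1} ∫_S u dy. -/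
/-!
Write `B` for the ball of radius `r / (1 + 2 M)` around the origin.

The gauge `|y| / φ(y/|y|)` of the domain `Ω` is positively homogeneous and Lipschitz with constant
`1 + 2 M` (`radialGauge_lipschitz`), so along a segment from `z ∈ B` to `x ∈ Ω` it stays below `r`:
the domain is star-shaped with respect to every point of `B` (`starDom_geometry`).

For such `x` and `z`, the fundamental theorem of calculus and Jensen's inequality bound
`|u x - u z| ^ p` by `|x - z| ^ p` times the integral of `|∇u| ^ p` over the segment
(`enorm_sub_rpow_le`). Integrating over `x ∈ Ω` and `z ∈ B`, the map
`x ↦ (1 - t) z + t x` has Jacobian `t ^ n ≥ 2 ^ (-n)` for `t ≥ 1/2`, and the map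
`z ↦ (1 - t) z + t x` has Jacobian `(1 - t) ^ n ≥ 2 ^ (-n)` for `t ≤ 1/2`, so there is no
singularity at either end (`lintegral_segments_le`). Hence some `z` satisfies
`‖u - u z‖_p ≤ C r ‖∇u‖_p` (`exists_point_poincare`). Finally, by Hölder's inequality, replacing
the constant `u z` by the mean over `S` costs a factor `1 + |Ω| / |S| ≤ 2 |Ω| / |S|`
(`eLpNorm_sub_average_le`), and `|Ω|` is at most a constant times `r ^ n`.
-/

open MeasureTheory Metric Set Filter Topology ENNReal NNReal

noncomputable section

/-- `Euc n` is the `n`-dimensional Euclidean space `ℝⁿ`. -/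
abbrev Euc (n : ℕ) : Type := EuclideanSpace ℝ (Fin n)

/-- The star-shaped Lipschitz domain with center `0`, scale `r` and radial profile `φ`:
`Ω = {y : |y| < r φ(y/|y|)}`. -/
def starDom (n : ℕ) (r : ℝ) (φ : Euc n → ℝ) : Set (Euc n) :=
  {0} ∪ {y | y ≠ 0 ∧ ‖y‖ < r * φ (‖y‖⁻¹ • y)}

/-- `u` is smooth on a neighborhood of the closure of `Ω`. -/
def SmoothNearClosure (n : ℕ) (Ω : Set (Euc n)) (u : Euc n → ℝ) : Prop :=
  ∃ V : Set (Euc n), IsOpen V ∧ closure Ω ⊆ V ∧ ContDiffOn ℝ (⊤ : ℕ∞) u V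

/-! ### The geometry of radial Lipschitz domains -/

/-- The Minkowski-type gauge of the domain with radial profile `φ`: for positive `φ`,
`radialGauge φ y < r` exactly when `y` lies in the domain of scale `r`. At the origin the value of
`φ` is irrelevant, since the numerator vanishes. -/
def radialGauge {n : ℕ} (φ : Euc n → ℝ) (y : Euc n) : ℝ := ‖y‖ / φ (‖y‖⁻¹ • y)

theorem unit_mem {n : ℕ} {x : Euc n} (hx : x ≠ 0) : ‖x‖⁻¹ • x ∈ sphere (0 : Euc n) 1 := by
  rw [mem_sphere_zero_iff_norm, norm_smul, norm_inv, norm_norm,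
    inv_mul_cancel₀ (norm_ne_zero_iff.2 hx)]

/-- Radial Lipschitz domains have a Lipschitz gauge `|y| / φ(y/|y|)`; this is what makes them
star-shaped with respect to a whole ball around the centre, not only the centre itself. -/
theorem radialGauge_lipschitz {n : ℕ} {M : ℝ} (hM : 0 < M) {φ : Euc n → ℝ}
    (hφ : LipschitzOnWith M.toNNReal φ (sphere (0 : Euc n) 1))
    (hb : ∀ z ∈ sphere (0 : Euc n) 1, φ z ∈ Icc 1 (1 + M)) (x y : Euc n) :
    radialGauge φ y ≤ radialGauge φ x + (1 + 2 * M) * ‖y - x‖ := by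
  unfold radialGauge
  rcases eq_or_ne y 0 with rfl | hy
  · have h1 : 0 ≤ ‖x‖ / φ (‖x‖⁻¹ • x) := by
      rcases eq_or_ne x 0 with rfl | hx
      · simp
      · have := (hb _ (unit_mem hx)).1
        positivity
    have : 0 ≤ (1 + 2 * M) * ‖(0 : Euc n) - x‖ := by positivity
    simpa using add_nonneg h1 this
  have hy1 := (hb _ (unit_mem hy)).1
  have hyx : ‖y‖ ≤ ‖x‖ + ‖y - x‖ := by
    simpa using norm_add_le x (y - x)
  have hxy : ‖x‖ ≤ ‖y‖ + ‖y - x‖ := by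
    have := norm_sub_le y (y - x); simpa using this
  rcases eq_or_ne x 0 with rfl | hx
  · have : ‖y‖ / φ (‖y‖⁻¹ • y) ≤ ‖y‖ := div_le_self (norm_nonneg _) hy1
    simp
    nlinarith [norm_nonneg y]
  have hx1 := (hb _ (unit_mem hx)).1
  have hnx : 0 < ‖x‖ := norm_pos_iff.2 hx
  have hny : 0 < ‖y‖ := norm_pos_iff.2 hy
  -- comparison of the two directions, scaled by `‖y‖`
  have hdir : ‖y‖ * ‖‖x‖⁻¹ • x - ‖y‖⁻¹ • y‖ ≤ 2 * ‖y - x‖ := by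
    have e : ‖y‖ * ‖‖x‖⁻¹ • x - ‖y‖⁻¹ • y‖ = ‖(‖y‖ - ‖x‖) • (‖x‖⁻¹ • x) - (y - x)‖ := by
      rw [← abs_of_pos hny, ← Real.norm_eq_abs, ← norm_smul, Real.norm_eq_abs, abs_of_pos hny]
      congr 1
      rw [smul_sub, sub_smul, smul_inv_smul₀ hny.ne', smul_inv_smul₀ hnx.ne']
      abel
    rw [e]
    refine (norm_sub_le _ _).trans ?_
    have hu : ‖‖x‖⁻¹ • x‖ = 1 := by simpa using unit_mem hx
    rw [norm_smul, hu, mul_one, Real.norm_eq_abs]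
    have := abs_norm_sub_norm_le y x
    linarith
  have hlip : |φ (‖x‖⁻¹ • x) - φ (‖y‖⁻¹ • y)| ≤ M * ‖‖x‖⁻¹ • x - ‖y‖⁻¹ • y‖ := by
    have := hφ.dist_le_mul _ (unit_mem hx) _ (unit_mem hy)
    rwa [Real.dist_eq, dist_eq_norm, Real.coe_toNNReal _ hM.le] at this
  set a := φ (‖x‖⁻¹ • x)
  set b := φ (‖y‖⁻¹ • y)
  have ha : 0 < a := by linarith
  have hbp : 0 < b := by linarith
  have key : ‖y‖ * |a - b| ≤ 2 * M * ‖y - x‖ := by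
    calc ‖y‖ * |a - b| ≤ ‖y‖ * (M * ‖‖x‖⁻¹ • x - ‖y‖⁻¹ • y‖) := by gcongr
      _ = M * (‖y‖ * ‖‖x‖⁻¹ • x - ‖y‖⁻¹ • y‖) := by ring
      _ ≤ M * (2 * ‖y - x‖) := by gcongr
      _ = _ := by ring
  have e1 : ‖y‖ / b = ‖y‖ / a + ‖y‖ * (a - b) / (a * b) := by
    field_simp
    ring
  have e2 : ‖y‖ / a ≤ ‖x‖ / a + ‖y - x‖ := by
    calc ‖y‖ / a ≤ (‖x‖ + ‖y - x‖) / a := by gcongr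
      _ = ‖x‖ / a + ‖y - x‖ / a := add_div _ _ _
      _ ≤ _ := by gcongr; exact div_le_self (norm_nonneg _) hx1
  have e3 : ‖y‖ * (a - b) / (a * b) ≤ 2 * M * ‖y - x‖ := by
    refine le_trans ?_ key
    refine le_trans (b := ‖y‖ * |a - b| / (a * b)) ?_ (div_le_self (by positivity) ?_)
    · gcongr; exact le_abs_self _
    · nlinarith
  linarith

theorem mem_starDom_iff {n : ℕ} {M r : ℝ} (hr : 0 < r) {φ : Euc n → ℝ}
    (hb : ∀ z ∈ sphere (0 : Euc n) 1, φ z ∈ Icc 1 (1 + M)) (y : Euc n) :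
    y ∈ starDom n r φ ↔ radialGauge φ y < r := by
  unfold starDom radialGauge
  rcases eq_or_ne y 0 with rfl | hy
  · simp [hr]
  · have := (hb _ (unit_mem hy)).1
    simp [hy, div_lt_iff₀ (show 0 < φ (‖y‖⁻¹ • y) by linarith)]

theorem radialGauge_smul {n : ℕ} {φ : Euc n → ℝ} {t : ℝ} (ht : 0 ≤ t) (y : Euc n) :
    radialGauge φ (t • y) = t * radialGauge φ y := by
  unfold radialGauge
  rcases ht.eq_or_lt with rfl | ht
  · simp
  have : ‖t • y‖⁻¹ • t • y = ‖y‖⁻¹ • y := by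
    rw [norm_smul, Real.norm_eq_abs, abs_of_pos ht, smul_smul]
    congr 1
    field_simp
  rw [this, norm_smul, Real.norm_eq_abs, abs_of_pos ht, mul_div_assoc]

/-- The only geometry the Poincaré inequality needs: the domain is open, squeezed between two
concentric balls, and star-shaped with respect to every point of the smaller one. -/
theorem starDom_geometry {n : ℕ} {M r : ℝ} (hM : 0 < M) (hr : 0 < r) {φ : Euc n → ℝ}
    (hφ : LipschitzOnWith M.toNNReal φ (sphere (0 : Euc n) 1))
    (hb : ∀ z ∈ sphere (0 : Euc n) 1, φ z ∈ Icc 1 (1 + M)) :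
    IsOpen (starDom n r φ) ∧ starDom n r φ ⊆ ball 0 (r * (1 + M)) ∧
    (∀ z ∈ ball (0 : Euc n) (r / (1 + 2 * M)), ∀ x ∈ starDom n r φ, ∀ t ∈ Icc (0 : ℝ) 1,
      (1 - t) • z + t • x ∈ starDom n r φ) ∧
    ball (0 : Euc n) (r / (1 + 2 * M)) ⊆ starDom n r φ := by
  have hset : starDom n r φ = {y | radialGauge φ y < r} := by
    ext y; exact mem_starDom_iff hr hb y
  have hstar : ∀ z ∈ ball (0 : Euc n) (r / (1 + 2 * M)), ∀ x ∈ starDom n r φ,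
      ∀ t ∈ Icc (0 : ℝ) 1, (1 - t) • z + t • x ∈ starDom n r φ := by
    intro z hz x hx t ht
    rw [mem_starDom_iff hr hb] at hx ⊢
    rw [mem_ball_zero_iff, lt_div_iff₀ (by positivity)] at hz
    have h := radialGauge_lipschitz hM hφ hb (t • x) ((1 - t) • z + t • x)
    rw [radialGauge_smul ht.1, add_sub_cancel_right, norm_smul, Real.norm_eq_abs,
      abs_of_nonneg (sub_nonneg.2 ht.2)] at h
    have h1 : t * radialGauge φ x ≤ t * r := by gcongr; exact ht.1
    rcases ht.2.eq_or_lt with rfl | h2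
    · simpa using hx
    · have : (1 - t) * (‖z‖ * (1 + 2 * M)) < (1 - t) * r :=
        mul_lt_mul_of_pos_left hz (by linarith)
      nlinarith
  refine ⟨?_, ?_, hstar, ?_⟩
  · rw [hset]
    refine isOpen_lt ?_ continuous_const
    have : LipschitzWith (1 + 2 * M).toNNReal (radialGauge φ) := by
      refine LipschitzWith.of_le_add_mul _ fun x y => ?_
      rw [Real.coe_toNNReal _ (by positivity), dist_eq_norm]
      exact radialGauge_lipschitz hM hφ hb y x
    exact this.continuous
  · rintro y (rfl | ⟨hy, hy'⟩)
    · simp; positivity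
    · rw [mem_ball_zero_iff]
      refine hy'.trans_le ?_
      gcongr
      exact (hb _ (unit_mem hy)).2
  · intro z hz
    have := hstar z hz 0 (Or.inl rfl) 0 (by simp)
    simpa using this

/-! ### Averaging over segments -/

/-- Change of variables under a homothety of ratio `t ≥ 1/2`, whose inverse has Jacobian
`t ^ (-n) ≤ 2 ^ n`. -/
theorem lintegral_comp_homothety_le {n : ℕ} {A Ω : Set (Euc n)} (hA : MeasurableSet A)
    (hΩ : MeasurableSet Ω) {F : Euc n → ℝ≥0∞} (hF : Measurable F) (w : Euc n) {t : ℝ}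
    (ht : 1 / 2 ≤ t) (hmaps : ∀ x ∈ A, w + t • x ∈ Ω) :
    ∫⁻ x in A, F (w + t • x) ≤ 2 ^ n * ∫⁻ y in Ω, F y := by
  have ht0 : 0 < t := by linarith
  calc ∫⁻ x in A, F (w + t • x)
      ≤ ∫⁻ x in A, Ω.indicator F (w + t • x) := by
        refine setLIntegral_mono' hA fun x hx => ?_
        rw [indicator_of_mem (hmaps x hx)]
    _ ≤ ∫⁻ x, Ω.indicator F (w + t • x) := setLIntegral_le_lintegral _ _
    _ = ∫⁻ y, Ω.indicator F (w + y) ∂(Measure.map (t • ·) volume) := by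
        have hm : Measurable fun y => Ω.indicator F (w + y) :=
          (hF.indicator hΩ).comp (measurable_const_add w)
        exact (lintegral_map hm (measurable_const_smul t)).symm
    _ = ENNReal.ofReal |(t ^ n)⁻¹| * ∫⁻ y in Ω, F y := by
        rw [Measure.map_addHaar_smul _ ht0.ne', lintegral_smul_measure, lintegral_add_left_eq_self,
          lintegral_indicator hΩ]
        simp
    _ ≤ 2 ^ n * ∫⁻ y in Ω, F y := by
        gcongr
        rw [abs_of_pos (by positivity), ← inv_pow, ENNReal.ofReal_pow (by positivity)]
        gcongr
        rw [show (2 : ℝ≥0∞) = ENNReal.ofReal 2 by simp]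
        apply ENNReal.ofReal_le_ofReal
        rw [inv_le_comm₀ ht0 (by norm_num)]
        linarith

/-- The heart of the Poincaré inequality: at every time `t`, one of the two endpoints can be
traded for the point `(1 - t) z + t x` at the cost of a Jacobian at most `2 ^ n`: the endpoint
`x` when `t ≥ 1/2`, and `z` when `t ≤ 1/2`. -/
theorem lintegral_segments_le {n : ℕ} {B Ω : Set (Euc n)} (hB : MeasurableSet B)
    (hΩ : MeasurableSet Ω) {F : Euc n → ℝ≥0∞} (hF : Measurable F)
    (hstar : ∀ z ∈ B, ∀ x ∈ Ω, ∀ t ∈ Icc (0 : ℝ) 1, (1 - t) • z + t • x ∈ Ω) :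
    ∫⁻ z in B, ∫⁻ x in Ω, ∫⁻ t in Ioc (0 : ℝ) 1, F ((1 - t) • z + t • x) ≤
      2 ^ n * (volume B + volume Ω) * ∫⁻ y in Ω, F y := by
  have hswap : ∫⁻ z in B, ∫⁻ x in Ω, ∫⁻ t in Ioc (0 : ℝ) 1, F ((1 - t) • z + t • x) =
      ∫⁻ t in Ioc (0 : ℝ) 1, ∫⁻ z in B, ∫⁻ x in Ω, F ((1 - t) • z + t • x) := by
    have h1 : ∀ z, ∫⁻ x in Ω, ∫⁻ t in Ioc (0 : ℝ) 1, F ((1 - t) • z + t • x) =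
        ∫⁻ t in Ioc (0 : ℝ) 1, ∫⁻ x in Ω, F ((1 - t) • z + t • x) := fun z =>
      lintegral_lintegral_swap (Measurable.aemeasurable (by unfold Function.uncurry; fun_prop))
    simp_rw [h1]
    refine lintegral_lintegral_swap (Measurable.aemeasurable ?_)
    unfold Function.uncurry
    refine Measurable.lintegral_prod_right' (f := fun q : (Euc n × ℝ) × Euc n =>
      F ((1 - q.1.2) • q.1.1 + q.1.2 • q.2)) ?_
    fun_prop
  rw [hswap]
  set I := ∫⁻ y in Ω, F y
  have hmain : ∀ t ∈ Ioc (0 : ℝ) 1, ∫⁻ z in B, ∫⁻ x in Ω, F ((1 - t) • z + t • x) ≤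
      2 ^ n * (volume B + volume Ω) * I := by
    intro t ht
    have ht' : t ∈ Icc (0 : ℝ) 1 := ⟨ht.1.le, ht.2⟩
    rcases le_total (1 / 2) t with h | h
    · calc ∫⁻ z in B, ∫⁻ x in Ω, F ((1 - t) • z + t • x)
          ≤ ∫⁻ _z in B, 2 ^ n * I := setLIntegral_mono' hB fun z hz =>
            lintegral_comp_homothety_le hΩ hΩ hF _ h fun x hx => hstar z hz x hx t ht'
        _ = 2 ^ n * volume B * I := by rw [setLIntegral_const]; ring
        _ ≤ _ := by gcongr; exact le_self_add
    · have hsw : ∫⁻ z in B, ∫⁻ x in Ω, F ((1 - t) • z + t • x) =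
          ∫⁻ x in Ω, ∫⁻ z in B, F ((1 - t) • z + t • x) :=
        lintegral_lintegral_swap (Measurable.aemeasurable (by unfold Function.uncurry; fun_prop))
      rw [hsw]
      calc ∫⁻ x in Ω, ∫⁻ z in B, F ((1 - t) • z + t • x)
          ≤ ∫⁻ _x in Ω, 2 ^ n * I := setLIntegral_mono' hΩ fun x hx => by
            simp_rw [add_comm ((1 - t) • _) (t • x)]
            refine lintegral_comp_homothety_le hB hΩ hF _ (by linarith) fun z hz => ?_
            rw [add_comm]
            exact hstar z hz x hx t ht'
        _ = 2 ^ n * volume Ω * I := by rw [setLIntegral_const]; ring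
        _ ≤ _ := by gcongr; exact le_add_self
  calc _ ≤ ∫⁻ _t in Ioc (0 : ℝ) 1, 2 ^ n * (volume B + volume Ω) * I :=
        setLIntegral_mono' measurableSet_Ioc hmain
    _ = _ := by rw [setLIntegral_const]; simp

/-- The fundamental theorem of calculus along the segment from `z` to `x`, followed by Jensen's
inequality in the time variable. -/
theorem enorm_sub_rpow_le {n : ℕ} {V : Set (Euc n)} (hV : IsOpen V) {u : Euc n → ℝ}
    (hu : ContDiffOn ℝ (⊤ : ℕ∞) u V) {p : ℝ} (hp : 1 ≤ p) {x z : Euc n}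
    (hseg : ∀ t ∈ Icc (0 : ℝ) 1, (1 - t) • z + t • x ∈ V) :
    ‖u x - u z‖ₑ ^ p ≤ ‖x - z‖ₑ ^ p *
      ∫⁻ t in Ioc (0 : ℝ) 1, ‖fderiv ℝ u ((1 - t) • z + t • x)‖ₑ ^ p := by
  set γ : ℝ → Euc n := fun t => (1 - t) • z + t • x with hγ
  have hγd : ∀ t, HasDerivAt γ (x - z) t := fun t => by
    have := (((hasDerivAt_id t).const_sub 1).smul_const z).add ((hasDerivAt_id t).smul_const x)
    have e : (-1 : ℝ) • z + (1 : ℝ) • x = x - z := by module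
    rw [e] at this
    exact this
  have hγc : Continuous γ := by fun_prop
  have hd : ∀ t ∈ uIcc (0 : ℝ) 1, HasDerivAt (u ∘ γ) (fderiv ℝ u (γ t) (x - z)) t := by
    intro t ht
    rw [uIcc_of_le zero_le_one] at ht
    have hdiff : DifferentiableAt ℝ u (γ t) :=
      (hu.differentiableOn (by simp)).differentiableAt (hV.mem_nhds (hseg t ht))
    exact hdiff.hasFDerivAt.comp_hasDerivAt t (hγd t)
  have hcont : ContinuousOn (fun t => fderiv ℝ u (γ t) (x - z)) (uIcc (0 : ℝ) 1) := by
    rw [uIcc_of_le zero_le_one]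
    exact ((hu.continuousOn_fderiv_of_isOpen hV (by simp)).comp hγc.continuousOn
      hseg).clm_apply continuousOn_const
  have hftc := intervalIntegral.integral_eq_sub_of_hasDerivAt hd hcont.intervalIntegrable
  have h01 : (u ∘ γ) 1 - (u ∘ γ) 0 = u x - u z := by simp [hγ]
  rw [h01, intervalIntegral.integral_of_le zero_le_one] at hftc
  have hmeas : Measurable fun t => fderiv ℝ u (γ t) :=
    (measurable_fderiv ℝ u).comp hγc.measurable
  have : IsProbabilityMeasure (volume.restrict (Ioc (0 : ℝ) 1)) := ⟨by simp⟩
  have hle : ‖u x - u z‖ₑ ≤ ‖x - z‖ₑ * ∫⁻ t in Ioc (0 : ℝ) 1, ‖fderiv ℝ u (γ t)‖ₑ := by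
    rw [← hftc, ← lintegral_const_mul _ hmeas.enorm]
    refine (enorm_integral_le_lintegral_enorm _).trans (lintegral_mono fun t => ?_)
    rw [mul_comm]
    exact (fderiv ℝ u (γ t)).le_opENorm _
  have hjensen : (∫⁻ t in Ioc (0 : ℝ) 1, ‖fderiv ℝ u (γ t)‖ₑ) ^ p ≤
      ∫⁻ t in Ioc (0 : ℝ) 1, ‖fderiv ℝ u (γ t)‖ₑ ^ p := by
    have h := eLpNorm'_le_eLpNorm'_of_exponent_le (μ := volume.restrict (Ioc (0 : ℝ) 1))
      zero_lt_one hp hmeas.aestronglyMeasurable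
    simp only [eLpNorm', ENNReal.rpow_one, one_div_one] at h
    calc _ ≤ _ := ENNReal.rpow_le_rpow h (by linarith)
      _ = _ := by rw [← ENNReal.rpow_mul, one_div_mul_cancel (by linarith), ENNReal.rpow_one]
  calc ‖u x - u z‖ₑ ^ p ≤ _ := ENNReal.rpow_le_rpow hle (by linarith)
    _ = ‖x - z‖ₑ ^ p * (∫⁻ t in Ioc (0 : ℝ) 1, ‖fderiv ℝ u (γ t)‖ₑ) ^ p :=
        ENNReal.mul_rpow_of_nonneg _ _ (by linarith)
    _ ≤ _ := by gcongr

/-- Poincaré inequality with the mean replaced by a value `u z`. The point `z` of the ball is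
chosen by the first moment method, applied to the upper bound of `enorm_sub_rpow_le`, which is
measurable in `z` even where `u` itself is not. -/
theorem exists_point_poincare {n : ℕ} {Ω V : Set (Euc n)} {R ρ : ℝ} (hρ : 0 < ρ)
    (hΩ : IsOpen Ω) (hΩR : Ω ⊆ ball 0 R) (hBΩ : ball 0 ρ ⊆ Ω)
    (hstar : ∀ z ∈ ball (0 : Euc n) ρ, ∀ x ∈ Ω, ∀ t ∈ Icc (0 : ℝ) 1,
      (1 - t) • z + t • x ∈ Ω)
    (hV : IsOpen V) (hΩV : Ω ⊆ V) {u : Euc n → ℝ} (hu : ContDiffOn ℝ (⊤ : ℕ∞) u V)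
    {p : ℝ} (hp : 1 ≤ p) :
    ∃ z ∈ Ω, ∫⁻ x in Ω, ‖u x - u z‖ₑ ^ p ≤
      ENNReal.ofReal (2 * R) ^ p * ENNReal.ofReal (2 ^ n * (1 + (R / ρ) ^ n)) *
        ∫⁻ x in Ω, ‖fderiv ℝ u x‖ₑ ^ p := by
  set B := ball (0 : Euc n) ρ
  set F : Euc n → ℝ≥0∞ := fun y => ‖fderiv ℝ u y‖ₑ ^ p
  have hF : Measurable F := (measurable_fderiv ℝ u).enorm.pow_const p
  have hB0 : volume B ≠ 0 := (measure_ball_pos _ _ hρ).ne'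
  have hBt : volume B ≠ ∞ := measure_ball_lt_top.ne
  have hR : 0 < R := by
    have := hΩR (hBΩ (mem_ball_self hρ)); simpa using this
  have hvol : volume Ω ≤ ENNReal.ofReal ((R / ρ) ^ n) * volume B := by
    refine (measure_mono hΩR).trans (le_of_eq ?_)
    have := Measure.addHaar_ball_mul_of_pos (volume : Measure (Euc n)) 0
      (show 0 < R / ρ by positivity) ρ
    rwa [div_mul_cancel₀ _ hρ.ne', finrank_euclideanSpace_fin] at this
  obtain ⟨z, hz, hle⟩ := exists_le_setLAverage (μ := volume) (s := B)
    (f := fun z => ∫⁻ x in Ω, ∫⁻ t in Ioc (0 : ℝ) 1, F ((1 - t) • z + t • x)) hB0 hBt (by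
      refine Measurable.aemeasurable ?_
      refine Measurable.lintegral_prod_right' (f := fun q : Euc n × Euc n =>
        ∫⁻ t in Ioc (0 : ℝ) 1, F ((1 - t) • q.1 + t • q.2)) ?_
      refine Measurable.lintegral_prod_right' (f := fun q : (Euc n × Euc n) × ℝ =>
        F ((1 - q.2) • q.1.1 + q.2 • q.1.2)) ?_
      fun_prop)
  refine ⟨z, hBΩ hz, ?_⟩
  rw [setLAverage_eq] at hle
  have hseg := lintegral_segments_le measurableSet_ball hΩ.measurableSet hF hstar
  have hconst : 2 ^ n * (volume B + volume Ω) ≤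
      ENNReal.ofReal (2 ^ n * (1 + (R / ρ) ^ n)) * volume B := by
    calc 2 ^ n * (volume B + volume Ω)
        ≤ 2 ^ n * (volume B + ENNReal.ofReal ((R / ρ) ^ n) * volume B) := by gcongr
      _ = _ := by
        rw [ENNReal.ofReal_mul (by positivity), ENNReal.ofReal_add (by positivity) (by positivity),
          ENNReal.ofReal_pow (by norm_num : (0 : ℝ) ≤ 2)]
        simp only [ENNReal.ofReal_ofNat, ENNReal.ofReal_one]
        ring
  have hH : ∫⁻ x in Ω, ∫⁻ t in Ioc (0 : ℝ) 1, F ((1 - t) • z + t • x) ≤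
      ENNReal.ofReal (2 ^ n * (1 + (R / ρ) ^ n)) * ∫⁻ x in Ω, F x := by
    refine hle.trans (ENNReal.div_le_of_le_mul (hseg.trans ?_))
    calc _ ≤ (ENNReal.ofReal (2 ^ n * (1 + (R / ρ) ^ n)) * volume B) * ∫⁻ x in Ω, F x := by gcongr
      _ = _ := by ring
  calc ∫⁻ x in Ω, ‖u x - u z‖ₑ ^ p
      ≤ ∫⁻ x in Ω, ENNReal.ofReal (2 * R) ^ p *
          ∫⁻ t in Ioc (0 : ℝ) 1, F ((1 - t) • z + t • x) := by
        refine setLIntegral_mono' hΩ.measurableSet fun x hx => ?_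
        refine (enorm_sub_rpow_le hV hu hp fun t ht => hΩV (hstar z hz x hx t ht)).trans ?_
        gcongr
        rw [← ofReal_norm]
        apply ENNReal.ofReal_le_ofReal
        have h1 := hΩR hx
        have h2 := hΩR (hBΩ hz)
        rw [mem_ball_zero_iff] at h1 h2
        linarith [norm_sub_le x z]
    _ = ENNReal.ofReal (2 * R) ^ p *
          ∫⁻ x in Ω, ∫⁻ t in Ioc (0 : ℝ) 1, F ((1 - t) • z + t • x) := by
        rw [lintegral_const_mul]
        refine Measurable.lintegral_prod_right' (f := fun q : Euc n × ℝ =>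
          F ((1 - q.2) • z + q.2 • q.1)) ?_
        fun_prop
    _ ≤ _ := by rw [mul_assoc]; gcongr

/-! ### From a point value to the mean over `S` -/

/-- Passing from an arbitrary constant `c` to the mean over `S` costs a factor
`1 + |Ω| / |S| ≤ 2 |Ω| / |S|`. -/
theorem eLpNorm_sub_average_le {α : Type*} [MeasurableSpace α] {μ : Measure α} {Ω S : Set α}
    (hΩt : μ Ω ≠ ∞) (hSΩ : S ⊆ Ω) (hS0 : μ S ≠ 0)
    {u : α → ℝ} {p : ℝ} (hp : 1 ≤ p) (hu : IntegrableOn u Ω μ) (c : ℝ) :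
    eLpNorm (fun y => u y - ⨍ z in S, u z ∂μ) (ENNReal.ofReal p) (μ.restrict Ω) ≤
      2 * μ Ω * (μ S)⁻¹ * eLpNorm (fun y => u y - c) (ENNReal.ofReal p) (μ.restrict Ω) := by
  have hp0 : 0 < p := by linarith
  have hP1 : 1 ≤ ENNReal.ofReal p := by simpa using hp
  have hPr : (ENNReal.ofReal p).toReal = p := ENNReal.toReal_ofReal hp0.le
  have hSt : μ S ≠ ∞ := ((measure_mono hSΩ).trans_lt hΩt.lt_top).ne
  have : IsFiniteMeasure (μ.restrict Ω) := ⟨by simpa using hΩt.lt_top⟩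
  have hum : AEStronglyMeasurable (fun y => u y - c) (μ.restrict Ω) :=
    hu.aestronglyMeasurable.sub aestronglyMeasurable_const
  set N := eLpNorm (fun y => u y - c) (ENNReal.ofReal p) (μ.restrict Ω) with hN
  have hΩ0 : μ Ω ≠ 0 := fun h => hS0 (measure_mono_null hSΩ h)
  have hratio : 1 ≤ μ Ω * (μ S)⁻¹ := by
    rw [← div_eq_mul_inv, ENNReal.le_div_iff_mul_le (Or.inl hS0) (Or.inl hSt), one_mul]
    exact measure_mono hSΩ
  have hmean : ‖c - ⨍ z in S, u z ∂μ‖ₑ ≤ (μ S)⁻¹ * ∫⁻ z in Ω, ‖u z - c‖ₑ ∂μ := by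
    have hfin : IsFiniteMeasure (μ.restrict S) := ⟨by simpa using hSt.lt_top⟩
    have e : ⨍ z in S, u z ∂μ - c = (μ S).toReal⁻¹ • ∫ z in S, (u z - c) ∂μ := by
      rw [integral_sub (hu.mono_set hSΩ) (integrable_const c), setAverage_eq]
      simp only [integral_const, measureReal_restrict_apply_univ, smul_eq_mul]
      simp only [Measure.real]
      have : (μ S).toReal ≠ 0 := (ENNReal.toReal_pos hS0 hSt).ne'
      field_simp
    rw [← enorm_neg, neg_sub, e, enorm_smul]
    have : ‖(μ S).toReal⁻¹‖ₑ = (μ S)⁻¹ := by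
      rw [Real.enorm_of_nonneg (by positivity),
        ENNReal.ofReal_inv_of_pos (ENNReal.toReal_pos hS0 hSt), ENNReal.ofReal_toReal hSt]
    rw [this]
    gcongr
    exact (enorm_integral_le_lintegral_enorm _).trans (lintegral_mono_set hSΩ)
  have hholder : ∫⁻ z in Ω, ‖u z - c‖ₑ ∂μ ≤ N * μ Ω ^ (1 - 1 / p) := by
    have := eLpNorm_le_eLpNorm_mul_rpow_measure_univ hP1 hum
    simpa [eLpNorm_one_eq_lintegral_enorm, hPr] using this
  calc eLpNorm (fun y => u y - ⨍ z in S, u z ∂μ) (ENNReal.ofReal p) (μ.restrict Ω)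
      = eLpNorm ((fun y => u y - c) + fun _ => c - ⨍ z in S, u z ∂μ) (ENNReal.ofReal p)
          (μ.restrict Ω) := by
        congr 1; ext y; simp
    _ ≤ N + ‖c - ⨍ z in S, u z ∂μ‖ₑ * μ Ω ^ (1 / p) := by
        refine (eLpNorm_add_le hum aestronglyMeasurable_const hP1).trans ?_
        rw [eLpNorm_const' _ (by simpa using hp0) (by simp), hPr]
        simp [hN]
    _ ≤ N + (μ S)⁻¹ * (N * μ Ω ^ (1 - 1 / p)) * μ Ω ^ (1 / p) := by
        gcongr; exact hmean.trans (by gcongr)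
    _ = 1 * N + μ Ω * (μ S)⁻¹ * N := by
        have : μ Ω ^ (1 - 1 / p) * μ Ω ^ (1 / p) = μ Ω := by
          rw [← ENNReal.rpow_add _ _ hΩ0 hΩt]; simp
        rw [← mul_assoc, mul_assoc _ (μ Ω ^ _), this]; ring
    _ ≤ μ Ω * (μ S)⁻¹ * N + μ Ω * (μ S)⁻¹ * N := by gcongr
    _ = _ := by ring

/-! ### The Poincaré inequality -/

/-- Poincaré inequality (A.2) on star-shaped Lipschitz domains:
`‖u − ⨍_S u‖_{L^p(Ω)} ≤ C(M,n,p) r^{n+1} |S|⁻¹ ‖∇u‖_{L^p(Ω)}`. -/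
theorem poincare_starshaped (n : ℕ) (hn : 2 ≤ n) (M : ℝ) (hM : 0 < M)
    (p : ℝ) (hp : 1 ≤ p) :
    ∃ C : ℝ, 0 < C ∧
    ∀ r : ℝ, 0 < r →
    ∀ φ : Euc n → ℝ, LipschitzOnWith M.toNNReal φ (sphere (0 : Euc n) 1) →
      (∀ z ∈ sphere (0 : Euc n) 1, φ z ∈ Icc 1 (1 + M)) →
    ∀ S : Set (Euc n), MeasurableSet S → S ⊆ starDom n r φ → 0 < volume S →
    ∀ u : Euc n → ℝ, SmoothNearClosure n (starDom n r φ) u →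
      (∫ y in starDom n r φ, |u y - ⨍ z in S, u z| ^ p) ^ (1 / p) ≤
        C * r ^ ((n : ℝ) + 1) * (volume S).toReal⁻¹ *
          (∫ y in starDom n r φ, ‖fderiv ℝ u y‖ ^ p) ^ (1 / p) := by
  have hp0 : 0 < p := by linarith
  set ω : ℝ := (volume (ball (0 : Euc n) 1)).toReal with hω
  have hω0 : 0 < ω := ENNReal.toReal_pos (measure_ball_pos _ _ one_pos).ne' measure_ball_lt_top.ne
  set K : ℝ := 2 ^ n * (1 + ((1 + M) * (1 + 2 * M)) ^ n) with hK
  have hK0 : 0 < K := by positivity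
  -- `2 |Ω| / |S|` with `|Ω| ≤ (r (1 + M)) ^ n ω`, times the bound
  -- `2 r (1 + M)` for the diameter, times `K ^ (1 / p)`
  refine ⟨2 * ((1 + M) ^ n * ω) * (2 * (1 + M) * K ^ (1 / p)), by positivity, ?_⟩
  intro r hr φ hφ hb S _ hSΩ hS0 u ⟨V, hV, hcl, hu⟩
  obtain ⟨hΩ, hΩR, hstar, hBΩ⟩ := starDom_geometry hM hr hφ hb
  set Ω := starDom n r φ with hΩdef
  have hR : 0 < r * (1 + M) := by positivity
  have hρ : 0 < r / (1 + 2 * M) := by positivity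
  have hΩV : Ω ⊆ V := subset_closure.trans hcl
  have hcpt : IsCompact (closure Ω) := (isBounded_ball.subset hΩR).isCompact_closure
  have hvol : volume Ω ≤ ENNReal.ofReal (r ^ n * ((1 + M) ^ n * ω)) := by
    refine (measure_mono hΩR).trans (le_of_eq ?_)
    rw [Measure.addHaar_ball_of_pos _ _ hR, finrank_euclideanSpace_fin, ← mul_assoc,
      ENNReal.ofReal_mul (by positivity), hω, ENNReal.ofReal_toReal measure_ball_lt_top.ne,
      mul_pow]
  have hΩt : volume Ω ≠ ∞ := (hvol.trans_lt ENNReal.ofReal_lt_top).ne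
  have hSt : volume S ≠ ∞ := ((measure_mono hSΩ).trans_lt hΩt.lt_top).ne
  have : IsFiniteMeasure (volume.restrict Ω) := ⟨by simpa using hΩt.lt_top⟩
  set P := ENNReal.ofReal p with hP
  have hP0 : P ≠ 0 := by simpa [hP] using hp0
  have hPt : P ≠ ∞ := by simp [hP]
  have hPr : P.toReal = p := ENNReal.toReal_ofReal hp0.le
  -- continuous functions on the compact closure are in every `L^p` of the domain
  have hmem : ∀ {G : Type} [NormedAddCommGroup G] [SecondCountableTopology G] {f : Euc n → G},
      ContinuousOn f (closure Ω) → MemLp f P (volume.restrict Ω) := by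
    intro G _ _ f hf
    obtain ⟨C, hC⟩ := hcpt.exists_bound_of_continuousOn hf
    refine MemLp.of_bound
      ((hf.mono subset_closure).aestronglyMeasurable hΩ.measurableSet) C ?_
    filter_upwards [ae_restrict_mem hΩ.measurableSet] with x hx using hC x (subset_closure hx)
  have huc : ContinuousOn u (closure Ω) := hu.continuousOn.mono hcl
  have hui : IntegrableOn u Ω :=
    (huc.integrableOn_compact hcpt).mono_set subset_closure
  have hDu : MemLp (fderiv ℝ u) P (volume.restrict Ω) :=
    hmem ((hu.continuousOn_fderiv_of_isOpen hV (by simp)).mono hcl)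
  have huS : MemLp (fun y => u y - ⨍ z in S, u z) P (volume.restrict Ω) :=
    hmem (huc.sub continuousOn_const)
  obtain ⟨z, -, hz⟩ := exists_point_poincare hρ hΩ hΩR hBΩ hstar hV hΩV hu hp
  have hKeq : 2 ^ n * (1 + (r * (1 + M) / (r / (1 + 2 * M))) ^ n) = K := by
    rw [hK]
    congr 3
    field_simp
  rw [hKeq] at hz
  have hpt : eLpNorm (fun y => u y - u z) P (volume.restrict Ω) ≤
      ENNReal.ofReal (2 * (r * (1 + M)) * K ^ (1 / p)) *
        eLpNorm (fderiv ℝ u) P (volume.restrict Ω) := by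
    rw [eLpNorm_eq_lintegral_rpow_enorm_toReal hP0 hPt,
      eLpNorm_eq_lintegral_rpow_enorm_toReal hP0 hPt, hPr]
    refine (ENNReal.rpow_le_rpow hz (by positivity)).trans (le_of_eq ?_)
    rw [ENNReal.mul_rpow_of_nonneg _ _ (by positivity),
      ENNReal.mul_rpow_of_nonneg _ _ (by positivity), ← ENNReal.rpow_mul,
      mul_one_div_cancel hp0.ne', ENNReal.rpow_one,
      ENNReal.ofReal_rpow_of_pos hK0, ← ENNReal.ofReal_mul (by positivity)]
  have hmain := eLpNorm_sub_average_le hΩt hSΩ hS0.ne' hp hui (u z)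
  have hfinal : eLpNorm (fun y => u y - ⨍ z in S, u z) P (volume.restrict Ω) ≤
      ENNReal.ofReal (2 * (r ^ n * ((1 + M) ^ n * ω)) * (volume S).toReal⁻¹ *
        (2 * (r * (1 + M)) * K ^ (1 / p))) * eLpNorm (fderiv ℝ u) P (volume.restrict Ω) := by
    refine hmain.trans ?_
    rw [ENNReal.ofReal_mul (by positivity), ENNReal.ofReal_mul (by positivity),
      ENNReal.ofReal_mul (by positivity),
      ENNReal.ofReal_inv_of_pos (ENNReal.toReal_pos hS0.ne' hSt), ENNReal.ofReal_toReal hSt,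
      ENNReal.ofReal_ofNat, mul_assoc (2 * _ * _)]
    gcongr
  rw [huS.eLpNorm_eq_integral_rpow_norm hP0 hPt, hDu.eLpNorm_eq_integral_rpow_norm hP0 hPt, hPr,
    ← ENNReal.ofReal_mul (by positivity), ENNReal.ofReal_le_ofReal_iff (by positivity)] at hfinal
  rw [one_div]
  refine hfinal.trans (le_of_eq ?_)
  rw [Real.rpow_add hr, Real.rpow_natCast, Real.rpow_one]
  ring_nf
end
end

section
/- (Identity underlying estimate (A.6).) Let n ≥ 1, let A ⊂ ∂B(0,1) ⊂ ℝⁿ be a measurable subset of the unit sphere, and let Ã = {y ∈ B(0,1) ∖ {0} : y/|y| ∈ A} be the radial cone over A inside the unit ball. Then for every function u smooth on a neighborhood of the closed unit ball that vanishes at every point of A, ∫_{Ã} u(y) dy = −(1/n) ∫_{Ã} z · ∇u(z) dz; in particular |∫_{Ã} u(y) dy| ≤ (1/n) ∫_{Ã} |y · ∇u(y)| dy. -/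
/-!
In polar coordinates `y = r • σ` the function `n * u y + fderiv ℝ u y y` becomes
`r ^ (1 - n) * d/dr (r ^ n * u (r • σ))`, and Lebesgue measure becomes `r ^ (n - 1) dr dσ`. Along
a ray with `σ ∈ A` the integral over `0 < r < 1` therefore telescopes to
`1 ^ n * u σ - 0 ^ n * u 0 = 0`, since `u` vanishes on `A` and `n ≥ 1`
(`integral_ray_eq_zero`). Rays with `σ ∉ A` do not meet the cone. Integrating over the sphere
(`integral_eq_zero_of_integral_rays_eq_zero`) shows that `n * u y + fderiv ℝ u y y` has zero
integral over the cone, which is the identity; the inequality is the triangle inequality for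
integrals.
-/

open MeasureTheory Metric Set Filter Topology ENNReal NNReal

noncomputable section

/-- The radial cone `Ã = {y ∈ B(0,1) \ {0} : y/|y| ∈ A}` over a subset `A` of the unit
sphere, inside the unit ball. -/
def coneOver (n : ℕ) (A : Set (Euc n)) : Set (Euc n) :=
  {y | y ∈ ball (0 : Euc n) 1 ∧ y ≠ 0 ∧ ‖y‖⁻¹ • y ∈ A}

/-- A function on `E` whose weighted integral along every ray from the origin vanishes has zero
integral. No integrability is assumed: the Bochner integral of a non-integrable function is `0`. -/
theorem integral_eq_zero_of_integral_rays_eq_zero {E : Type*} [NormedAddCommGroup E]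
    [NormedSpace ℝ E] [MeasurableSpace E] [BorelSpace E] [FiniteDimensional ℝ E]
    (μ : Measure E) [μ.IsAddHaarMeasure] [Nontrivial E] (g : E → ℝ)
    (h : ∀ σ ∈ sphere (0 : E) 1,
      ∫ r in Ioi (0 : ℝ), r ^ (Module.finrank ℝ E - 1) * g (r • σ) = 0) :
    ∫ x, g x ∂μ = 0 := by
  have h1 : ∫ x, g x ∂μ = ∫ x : ({(0)}ᶜ : Set E), g x ∂(μ.comap (↑)) := by
    rw [integral_subtype_comap (measurableSet_singleton _).compl g, restrict_compl_singleton]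
  have h2 : ∫ x : ({(0)}ᶜ : Set E), g x ∂(μ.comap (↑)) =
      ∫ p : sphere (0 : E) 1 × Ioi (0 : ℝ), g (p.2.1 • p.1.1)
        ∂μ.toSphere.prod (.volumeIoiPow (Module.finrank ℝ E - 1)) := by
    rw [← μ.measurePreserving_homeomorphUnitSphereProd.integral_comp
      (Homeomorph.measurableEmbedding _)]
    refine integral_congr_ae (.of_forall fun x => ?_)
    have hx : ‖(x : E)‖ ≠ 0 := norm_ne_zero_iff.2 x.2
    simp [smul_smul, hx]
  rw [h1, h2]
  by_cases hi : Integrable (fun p : sphere (0 : E) 1 × Ioi (0 : ℝ) => g (p.2.1 • p.1.1))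
      (μ.toSphere.prod (.volumeIoiPow (Module.finrank ℝ E - 1)))
  swap
  · exact integral_undef hi
  rw [integral_prod _ hi]
  refine integral_eq_zero_of_ae (.of_forall fun σ => ?_)
  simp only [Measure.volumeIoiPow, ENNReal.ofReal, Pi.zero_apply]
  rw [integral_withDensity_eq_integral_smul (measurable_subtype_coe.pow_const _).real_toNNReal,
    integral_subtype_comap measurableSet_Ioi
      fun a ↦ Real.toNNReal (a ^ (Module.finrank ℝ E - 1)) • g (a • σ.1)]
  refine Eq.trans ?_ (h σ.1 σ.2)
  refine setIntegral_congr_fun measurableSet_Ioi fun x hx ↦ ?_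
  have hx0 : (0 : ℝ) < x := hx
  simp only [NNReal.smul_def, smul_eq_mul]
  rw [Real.coe_toNNReal _ (pow_nonneg hx0.le _)]

/-- The radial integral of `n * u y + fderiv ℝ u y y` along a ray is that of the exact derivative
of `r ^ n * u (r • σ)`. -/
theorem integral_ray_eq_zero {E : Type*} [NormedAddCommGroup E] [NormedSpace ℝ E]
    (n : ℕ) (hn : 1 ≤ n) {V : Set E} (hV : IsOpen V) (hVb : closedBall (0 : E) 1 ⊆ V)
    {u : E → ℝ} (hu : ContDiffOn ℝ (⊤ : ℕ∞) u V) {σ : E} (hσ : σ ∈ sphere (0 : E) 1)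
    (h0 : u σ = 0) :
    ∫ r in (0 : ℝ)..1, r ^ (n - 1) * (n * u (r • σ) + fderiv ℝ u (r • σ) (r • σ)) = 0 := by
  have hmem : ∀ r ∈ uIcc (0 : ℝ) 1, r • σ ∈ V := fun r hr => by
    rw [uIcc_of_le (zero_le_one (α := ℝ))] at hr
    apply hVb
    simp [norm_smul, mem_sphere_zero_iff_norm.1 hσ, abs_of_nonneg hr.1, hr.2]
  have hd : ContinuousOn (fderiv ℝ u) V := hu.continuousOn_fderiv_of_isOpen hV (by simp)
  have hc : ContinuousOn (fun r : ℝ => r • σ) (uIcc 0 1) := by fun_prop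
  have hderiv : ∀ r ∈ uIcc (0 : ℝ) 1, HasDerivAt (fun r : ℝ => r ^ n * u (r • σ))
      (r ^ (n - 1) * (n * u (r • σ) + fderiv ℝ u (r • σ) (r • σ))) r := fun r hr => by
    have hdu : HasFDerivAt u (fderiv ℝ u (r • σ)) (r • σ) :=
      ((hu.contDiffAt (hV.mem_nhds (hmem r hr))).differentiableAt (by simp)).hasFDerivAt
    have hray : HasDerivAt (fun r : ℝ => r • σ) σ r := by
      simpa using (hasDerivAt_id r).smul_const σ
    refine ((hasDerivAt_pow n r).mul (hdu.comp_hasDerivAt r hray)).congr_deriv ?_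
    obtain ⟨m, rfl⟩ : ∃ m, n = m + 1 := ⟨n - 1, by omega⟩
    simp only [map_smul, smul_eq_mul, Nat.add_sub_cancel, Function.comp_apply]
    ring
  rw [intervalIntegral.integral_eq_sub_of_hasDerivAt hderiv]
  · simp [h0, show n ≠ 0 by omega]
  · apply ContinuousOn.intervalIntegrable
    have h1 := hu.continuousOn.comp hc hmem
    have h2 := (hd.comp hc hmem).clm_apply hc
    exact (continuousOn_pow _).mul ((continuousOn_const.mul h1).add h2)

theorem measurableSet_coneOver (n : ℕ) {A : Set (Euc n)} (hA : MeasurableSet A) :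
    MeasurableSet (coneOver n A) := by
  have hm : Measurable fun y : Euc n => ‖y‖⁻¹ • y := by fun_prop
  exact measurableSet_ball.inter ((measurableSet_singleton 0).compl.inter (hm hA))

/-- The identity underlying estimate (A.6): if `A ⊆ ∂B(0,1)` is measurable and `u` is smooth
on a neighborhood of the closed unit ball and vanishes at every point of `A`, then
`∫_{Ã} u(y) dy = −(1/n) ∫_{Ã} z · ∇u(z) dz`, and in particular
`|∫_{Ã} u(y) dy| ≤ (1/n) ∫_{Ã} |y · ∇u(y)| dy`. -/
theorem cone_integration_identity (n : ℕ) (hn : 1 ≤ n)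
    (A : Set (Euc n)) (hA : MeasurableSet A) (hAs : A ⊆ sphere (0 : Euc n) 1)
    (u : Euc n → ℝ)
    (hu : ∃ V : Set (Euc n), IsOpen V ∧ closedBall (0 : Euc n) 1 ⊆ V ∧ ContDiffOn ℝ (⊤ : ℕ∞) u V)
    (hvan : ∀ y ∈ A, u y = 0) :
    (∫ y in coneOver n A, u y) = -(1 / (n : ℝ)) * ∫ z in coneOver n A, fderiv ℝ u z z ∧
    |∫ y in coneOver n A, u y| ≤ (1 / (n : ℝ)) * ∫ y in coneOver n A, |fderiv ℝ u y y| := by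
  obtain ⟨V, hV, hVb, hu⟩ := hu
  have : Nonempty (Fin n) := ⟨⟨0, hn⟩⟩
  have hn0 : (n : ℝ) ≠ 0 := by
    have : n ≠ 0 := by omega
    exact_mod_cast this
  have hC := measurableSet_coneOver n hA
  have hsub : coneOver n A ⊆ closedBall (0 : Euc n) 1 := fun y hy => ball_subset_closedBall hy.1
  have hi1 : IntegrableOn u (coneOver n A) :=
    ((hu.continuousOn.mono hVb).integrableOn_compact (isCompact_closedBall 0 1)).mono_set hsub
  have hi2 : IntegrableOn (fun z => fderiv ℝ u z z) (coneOver n A) := by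
    have hd : ContinuousOn (fderiv ℝ u) V := hu.continuousOn_fderiv_of_isOpen hV (by simp)
    exact (((hd.mono hVb).clm_apply continuousOn_id).integrableOn_compact
      (isCompact_closedBall 0 1)).mono_set hsub
  have key : ∫ y in coneOver n A, (n * u y + fderiv ℝ u y y) = 0 := by
    rw [← integral_indicator hC]
    apply integral_eq_zero_of_integral_rays_eq_zero
    intro σ hσ
    have hσ1 : ‖σ‖ = 1 := mem_sphere_zero_iff_norm.1 hσ
    have hσ0 : σ ≠ 0 := by
      rintro rfl
      simp at hσ1
    rw [finrank_euclideanSpace_fin]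
    have hray : ∀ r : ℝ, 0 < r → (r • σ ∈ coneOver n A ↔ r < 1 ∧ σ ∈ A) := fun r hr => by
      simp [coneOver, norm_smul, hσ1, abs_of_pos hr, hr.ne', hσ0, smul_smul]
    by_cases hσA : σ ∈ A
    · refine Eq.trans ?_ (integral_ray_eq_zero n hn hV hVb hu hσ (hvan σ hσA))
      rw [intervalIntegral.integral_of_le (zero_le_one (α := ℝ)), integral_Ioc_eq_integral_Ioo,
        ← Ioi_inter_Iio, ← setIntegral_indicator measurableSet_Iio]
      refine setIntegral_congr_fun measurableSet_Ioi fun r hr => ?_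
      by_cases hr1 : r < 1
      · rw [indicator_of_mem ((hray r hr).2 ⟨hr1, hσA⟩), indicator_of_mem (mem_Iio.2 hr1)]
      · rw [indicator_of_notMem (fun h => hr1 ((hray r hr).1 h).1),
          indicator_of_notMem (fun h => hr1 (mem_Iio.1 h)), mul_zero]
    · refine setIntegral_eq_zero_of_forall_eq_zero fun r hr => ?_
      rw [indicator_of_notMem (fun h => hσA ((hray r hr).1 h).2), mul_zero]
  have hid : (∫ y in coneOver n A, u y) =
      -(1 / (n : ℝ)) * ∫ z in coneOver n A, fderiv ℝ u z z := by
    rw [integral_add (hi1.const_mul _) hi2, integral_const_mul] at key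
    field_simp
    linarith
  refine ⟨hid, ?_⟩
  rw [hid, abs_mul, abs_neg, abs_of_nonneg (by positivity : (0 : ℝ) ≤ 1 / n)]
  gcongr
  exact abs_integral_le_integral_abs
end
end
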